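/- Let G = (V ∪ {s}, E) be a finite sandpile graph and W ⊆ V with the induced subgraph of G on (V ∪ {s}) \ W connected. Suppose ξ ∈ R_{G_W} satisfies: (i) the entry points E(ξ,W) are pairwise non-adjacent in G; (ii) ξ(w) = deg_W(w) for every w ∈ E(ξ,W); and (iii) with W' = W \ E(ξ,W), the restriction ξ_{W'} is minimal in G_{W'}. Then ξ is minimal in G_W. -/

import Mathlib

open scoped Classical

namespace Sandpile

/-- A finite sandpile multigraph on vertex set `α` (which plays the role of `V ∪ {s}`),
given by a distinguished sink and symmetric edge multiplicities. -/
structure Graph (α : Type*) where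
  sink : α
  b : α → α → ℕ

namespace Graph

variable {α : Type*} [Fintype α] [DecidableEq α] (G : Graph α)

/-- The non-sink vertices (the set `V`). -/
def VSet : Finset α := Finset.univ.erase G.sink

/-- Degree restricted to a finite set of vertices: `deg_F(x) = ∑_{y ∈ F} b_{xy}`. -/
def degIn (F : Finset α) (x : α) : ℕ := ∑ y ∈ F, G.b x y

/-- Total degree `deg_G(x)`. -/
def deg (x : α) : ℕ := ∑ y, G.b x y

/-- `G` is a genuine finite sandpile graph: symmetric multiplicities, no loops, connected. -/
def IsSandpileGraph : Prop :=
  (∀ x y, G.b x y = G.b y x) ∧ (∀ x, G.b x x = 0) ∧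
    ∀ x y : α, Relation.ReflTransGen (fun u v => 0 < G.b u v) x y

/-- Connectivity of the subgraph induced on the vertex set `S`. -/
def ConnectedOn (S : Set α) : Prop :=
  ∀ x ∈ S, ∀ y ∈ S,
    Relation.ReflTransGen (fun u v => u ∈ S ∧ v ∈ S ∧ 0 < G.b u v) x y

/-- A sandpile is stable if every non-sink vertex carries fewer particles than its degree. -/
def Stable (η : α → ℕ) : Prop := ∀ x ∈ G.VSet, η x < G.deg x

/-- `η` is ample for `F` if some vertex of `F` has at least `deg_F` particles. -/
def AmpleFor (η : α → ℕ) (F : Finset α) : Prop := ∃ x ∈ F, G.degIn F x ≤ η x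

/-- Dhar's burning test: recurrent = stable and ample for every nonempty `F ⊆ V`. -/
def Recurrent (η : α → ℕ) : Prop :=
  G.Stable η ∧ ∀ F ⊆ G.VSet, F.Nonempty → G.AmpleFor η F

/-- Remove one particle at `w` (`η - δ_w`). -/
def SubOne (η : α → ℕ) (w : α) : α → ℕ := fun x => if x = w then η x - 1 else η x

/-- `η` and `ξ` agree on `W` (restriction `η_W = ξ_W`). -/
def EqOn (η ξ : α → ℕ) (W : Finset α) : Prop := ∀ x ∈ W, η x = ξ x

/-- `ξ` is (generalized) minimal on `W`: it extends to a recurrent sandpile, and no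
recurrent extension stays recurrent after removing a particle from a vertex of `W`.
(`η - δ_w ∉ R_G` holds automatically if `η w = 0`, as then `η - δ_w` is not a configuration.) -/
def Minimal (W : Finset α) (ξ : α → ℕ) : Prop :=
  (∃ η, G.Recurrent η ∧ EqOn η ξ W) ∧
    ∀ η, G.Recurrent η → EqOn η ξ W → ∀ w ∈ W, ¬(1 ≤ η w ∧ G.Recurrent (SubOne η w))

/-- `ν_G[P]`: the uniform probability of the event `P` under the uniform measure on
recurrent configurations (configurations are normalized to vanish at the sink). -/
noncomputable def prob (P : (α → ℕ) → Prop) : ℝ :=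
  (Nat.card {η : α → ℕ // η G.sink = 0 ∧ G.Recurrent η ∧ P η} : ℝ) /
    (Nat.card {η : α → ℕ // η G.sink = 0 ∧ G.Recurrent η} : ℝ)

/-- The graph Laplacian with the sink row and column deleted. -/
noncomputable def lapRed :
    Matrix {x : α // x ≠ G.sink} {x : α // x ≠ G.sink} ℝ :=
  Matrix.of fun x y =>
    if (x : α) = (y : α) then (G.deg ↑x : ℝ) else -(G.b ↑x ↑y : ℝ)

/-- `H = (Δ')⁻¹`, extended by `0` on the sink. -/
noncomputable def Hfun (x y : α) : ℝ :=
  if hx : x = G.sink then 0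
  else if hy : y = G.sink then 0
  else (G.lapRed)⁻¹ ⟨x, hx⟩ ⟨y, hy⟩

/-- Oriented edges of the multigraph `G`: an edge from `p.1` to `p.2.1`, with copy
index `p.2.2` (parallel edges are distinct). -/
abbrev OEdge (G : Graph α) : Type _ := {p : α × α × ℕ // p.2.2 < G.b p.1 p.2.1}

/-- `K_G(e,f) = δ_{ef} - Y_G(e,f)` where `Y_G` is the transfer current matrix. -/
noncomputable def Kmat (e f : G.OEdge) : ℝ :=
  (if e = f then 1 else 0) -
    (G.Hfun e.1.1 f.1.1 - G.Hfun e.1.1 f.1.2.1 - G.Hfun e.1.2.1 f.1.1 +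
      G.Hfun e.1.2.1 f.1.2.1)

/-- Unburnt sets of phase one of the burning algorithm based on `Q`:
`U_0 = V`, `U_i = U_{i-1} \ B_i` with `B_i = {x ∈ U_{i-1} \ Q : η x ≥ deg_{U_{i-1}} x}`. -/
def U1 (η : α → ℕ) (Q : Finset α) : ℕ → Finset α
  | 0 => G.VSet
  | i + 1 => (U1 η Q i).filter fun x => x ∈ Q ∨ η x < G.degIn (U1 η Q i) x

/-- The final unburnt set `U^{(1)}_I` of phase one (the sequence `U1` is decreasing,
hence stabilizes after at most `|α|` steps). -/
def U1lim (η : α → ℕ) (Q : Finset α) : Finset α := G.U1 η Q (Fintype.card α)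

/-- Unburnt sets of phase two of the burning algorithm based on `Q`. -/
def U2 (η : α → ℕ) (Q : Finset α) : ℕ → Finset α
  | 0 => G.U1lim η Q
  | i + 1 => (U2 η Q i).filter fun x => η x < G.degIn (U2 η Q i) x

/-- Recurrence in the wired graph `G_W` (note `deg_{G_W}(x) = deg_G(x)` for `x ∈ W`,
and `deg_F` for `F ⊆ W` is the same in `G_W` and `G`). -/
def WiredRecurrent (W : Finset α) (ξ : α → ℕ) : Prop :=
  (∀ x ∈ W, ξ x < G.deg x) ∧ ∀ F ⊆ W, F.Nonempty → ∃ x ∈ F, G.degIn F x ≤ ξ x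

/-- `ξ` is minimal in the wired graph `G_W`. -/
def WiredMinimal (W : Finset α) (ξ : α → ℕ) : Prop :=
  G.WiredRecurrent W ξ ∧ ∀ w ∈ W, ¬(1 ≤ ξ w ∧ G.WiredRecurrent W (SubOne ξ w))

/-- Entry points `E(ξ,W)` of `ξ ∈ R_{G_W}`: vertices burnable at the first step. -/
def entryPoints (W : Finset α) (ξ : α → ℕ) : Finset α :=
  W.filter fun w => G.degIn W w ≤ ξ w

/-- `x` is burnable given the burnt set `S`: `η(x) ≥ deg_G(x) − ∑_{y ∈ S} b_{xy}`. -/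
def Burnable (η : α → ℕ) (S : Finset α) (x : α) : Prop :=
  G.degIn (Finset.univ \ S) x ≤ η x

/-- A burning sequence starting from the burnt set `S`. -/
def IsBurnSeq (η : α → ℕ) : Finset α → List α → Prop
  | _, [] => True
  | S, x :: l => x ∉ S ∧ G.Burnable η S x ∧ IsBurnSeq η (insert x S) l

/-- `B` is a burnt set for `η`: some burning sequence from `{s}` burns exactly `B`. -/
def IsBurntSet (η : α → ℕ) (B : Finset α) : Prop :=
  ∃ l : List α, G.IsBurnSeq η {G.sink} l ∧ l.toFinset = B

/-- Reachability within the vertex set `S`. -/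
def ReachIn (S : Set α) (x y : α) : Prop :=
  Relation.ReflTransGen (fun u v => u ∈ S ∧ v ∈ S ∧ 0 < G.b u v) x y

/-- `C` is a connected component of the subgraph induced on `(V ∪ {s}) \ W`
that does not contain the sink. -/
def IsHoleComp (W C : Finset α) : Prop :=
  C.Nonempty ∧ G.sink ∉ C ∧
    ∀ x ∈ C, ∀ y : α, y ∈ C ↔ y ∉ W ∧ G.ReachIn {a : α | a ∉ W} x y

/-- Adjacency induced by a finite set `t` of (undirected, indexed) edges. -/
def edgeRel (t : Finset (Sym2 α × ℕ)) (u v : α) : Prop := ∃ k : ℕ, (s(u, v), k) ∈ t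

/-- `t` is a spanning tree of the multigraph `G`: it consists of edges of `G`
(parallel edges distinct), it spans (connected), and every edge is a bridge
(equivalently, it is acyclic). -/
def IsSpanningTree (t : Finset (Sym2 α × ℕ)) : Prop :=
  (∀ p ∈ t, ∃ x y : α, p.1 = s(x, y) ∧ p.2 < G.b x y) ∧
  (∀ u v : α, Relation.ReflTransGen (edgeRel t) u v) ∧
  ∀ p ∈ t, ∀ x y : α, p.1 = s(x, y) →
    ¬ Relation.ReflTransGen (edgeRel (t.erase p)) x y

/-- Adjacency induced by a set of (undirected, indexed) edges. -/
def edgeRelSet (t : Set (Sym2 α × ℕ)) (u v : α) : Prop := ∃ k : ℕ, (s(u, v), k) ∈ t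

/-- Set version of `IsSpanningTree`. -/
def IsSpanningTreeSet (t : Set (Sym2 α × ℕ)) : Prop :=
  (∀ p ∈ t, ∃ x y : α, p.1 = s(x, y) ∧ p.2 < G.b x y) ∧
  (∀ u v : α, Relation.ReflTransGen (edgeRelSet t) u v) ∧
  ∀ p ∈ t, ∀ x y : α, p.1 = s(x, y) →
    ¬ Relation.ReflTransGen (edgeRelSet (t \ {p})) x y

/-- The step at which `x` burns in phase one (0 for the sink; `sInf ∅ = 0` if `x`
never burns in phase one). -/
noncomputable def p1time (η : α → ℕ) (Q : Finset α) (x : α) : ℕ :=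
  sInf {i : ℕ | x ∉ G.U1 η Q i}

/-- The step at which `x` burns in phase two. -/
noncomputable def p2time (η : α → ℕ) (Q : Finset α) (x : α) : ℕ :=
  sInf {i : ℕ | x ∉ G.U2 η Q i}

/-- Vertices burnt at step `i` of phase one (`B^{(1)}_0 = {s}`). -/
def B1 (η : α → ℕ) (Q : Finset α) : ℕ → Finset α
  | 0 => {G.sink}
  | i + 1 => G.U1 η Q i \ G.U1 η Q (i + 1)

/-- Vertices burnt at step `i` of phase two (`B^{(2)}_0` = everything burnt in phase
one, including the sink). -/
def B2 (η : α → ℕ) (Q : Finset α) : ℕ → Finset α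
  | 0 => Finset.univ \ G.U1lim η Q
  | i + 1 => G.U2 η Q i \ G.U2 η Q (i + 1)

/-- The set `B^{(p)}_{i-1}` of vertices burnt at the step preceding the step at which
`x` burns (in the appropriate phase). -/
noncomputable def prevBurnt (η : α → ℕ) (Q : Finset α) (x : α) : Finset α :=
  if x ∈ G.U1lim η Q then G.B2 η Q (G.p2time η Q x - 1)
  else G.B1 η Q (G.p1time η Q x - 1)

/-- The set `D = B^{(p)}_0 ∪ ⋯ ∪ B^{(p)}_{i-1}` of vertices burnt strictly before `x`
in the phase in which `x` burns. -/
noncomputable def burntBefore (η : α → ℕ) (Q : Finset α) (x : α) : Finset α :=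
  if x ∈ G.U1lim η Q then Finset.univ \ G.U2 η Q (G.p2time η Q x - 1)
  else Finset.univ \ G.U1 η Q (G.p1time η Q x - 1)

/-- `j = η(x) − deg_G(x) + n_x` with `n_x = ∑_{y ∈ D} b_{xy}`. -/
noncomputable def jX (η : α → ℕ) (Q : Finset α) (x : α) : ℕ :=
  η x + G.degIn (G.burntBefore η Q x) x - G.deg x

/-- The defining property of the edge `e_x` of the burning bijection based on `Q`:
`e_x` has tail `x`, head burnt at the previous step, and exactly `j` smaller elements
of `P_x` under the given edge order `lt x`. -/
def EdgeSpec (lt : α → G.OEdge → G.OEdge → Prop) (η : α → ℕ) (Q : Finset α)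
    (x : α) (e : G.OEdge) : Prop :=
  e.1.1 = x ∧ e.1.2.1 ∈ G.prevBurnt η Q x ∧
    {f : G.OEdge | f.1.1 = x ∧ f.1.2.1 ∈ G.prevBurnt η Q x ∧ lt x f e}.ncard =
      G.jX η Q x

/-- The (oriented) spanning tree `t(η) = {e_x : x ∈ V}` assigned to `η` by the
burning bijection based on `Q`. -/
def treeOf (lt : α → G.OEdge → G.OEdge → Prop) (η : α → ℕ) (Q : Finset α) :
    Set G.OEdge :=
  {e | ∃ x ∈ G.VSet, G.EdgeSpec lt η Q x e}

/-- Forget the orientation of an oriented edge. -/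
def undir (e : G.OEdge) : Sym2 α × ℕ := (s(e.1.1, e.1.2.1), e.1.2.2)

/-- Total burning order: phase-one vertices first (at their phase-one step), then
phase-two vertices. -/
noncomputable def burnOrder (η : α → ℕ) (Q : Finset α) (x : α) : ℕ :=
  if x ∈ G.U1lim η Q then Fintype.card α + 1 + G.p2time η Q x else G.p1time η Q x

/-- Edge multiplicities of the auxiliary graph `G_W^*` (on vertex set `W ∪ {s}`):
`b*_{xy} = b_{xy}` for `x,y ∈ W`; `b*_{xs} = ∑_{z ∉ W} b_{xz}` for `x ∈ Q` and
`b*_{xs} = 0` for `x ∈ W \ Q`. -/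
def bstar (Q W : Finset α) (x y : α) : ℕ :=
  if x ∈ W ∧ y ∈ W then G.b x y
  else if x ∈ W ∧ y = G.sink then
    if x ∈ Q then ∑ z ∈ Finset.univ \ W, G.b x z else 0
  else if y ∈ W ∧ x = G.sink then
    if y ∈ Q then ∑ z ∈ Finset.univ \ W, G.b z y else 0
  else 0

/-- Recurrence in the auxiliary graph `G_W^*`. -/
def StarRecurrent (Q W : Finset α) (ζ : α → ℕ) : Prop :=
  (∀ x ∈ W, ζ x < ∑ y ∈ insert G.sink W, G.bstar Q W x y) ∧
    ∀ F ⊆ W, F.Nonempty → ∃ x ∈ F, (∑ y ∈ F, G.bstar Q W x y) ≤ ζ x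

end Graph

end Sandpile

open Sandpile

/-! Let `A` be the set of entry points and suppose that `ξ - δ_w` is still recurrent in `G_W`. If
`w ∉ A`, restricting to `W \ A` contradicts minimality there. If `w ∈ A`, burn `W` with `ξ - δ_w`
until `w` burns. Minimality on `W \ A` leaves no slack: a vertex of `W \ A` that burns carries
exactly as many particles as it has edges to the unburnt part of `W \ A`, so it has no edge to an
unburnt vertex of `A`. Hence no neighbour of `w` burns before `w`, and `w` needs `deg_W(w)`
particles to burn, while `ξ - δ_w` has only `deg_W(w) - 1` there. -/

namespace Sandpile.Graph

section

variable {α : Type*} {G : Graph α} {η : α → ℕ} {A F U W : Finset α} {x : α}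

lemma degIn_mono (hFU : F ⊆ U) (x : α) : G.degIn F x ≤ G.degIn U x :=
  Finset.sum_le_sum_of_subset hFU

lemma degIn_eq_degIn_iff (hFU : F ⊆ U) :
    G.degIn F x = G.degIn U x ↔ ∀ y ∈ U, y ∉ F → G.b x y = 0 := by
  refine ⟨fun h y hyU hyF => ?_, fun h => Finset.sum_subset hFU h⟩
  have hle : G.degIn (insert y F) x ≤ G.degIn U x :=
    degIn_mono (Finset.insert_subset hyU hFU) x
  have hinsert : G.degIn (insert y F) x = G.b x y + G.degIn F x := Finset.sum_insert hyF
  omega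

lemma WiredRecurrent.mono [Fintype α] (h : G.WiredRecurrent W η) (hAW : A ⊆ W) :
    G.WiredRecurrent A η :=
  ⟨fun x hx => h.1 x (hAW hx), fun F hF => h.2 F (hF.trans hAW)⟩

end

variable {α : Type*} [DecidableEq α] {G : Graph α} {η ζ ξ : α → ℕ} {A F U W : Finset α} {w x : α}

lemma subOne_self (η : α → ℕ) (w : α) : SubOne η w w = η w - 1 := if_pos rfl

lemma subOne_of_ne (η : α → ℕ) (h : x ≠ w) : SubOne η w x = η x := if_neg h

lemma subOne_le (η : α → ℕ) (w : α) : SubOne η w ≤ η := by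
  intro x
  unfold SubOne
  split_ifs
  · exact Nat.sub_le _ _
  · exact le_rfl

/-- `G.BurnsTo η W U` says that the burning algorithm for `η` in the wired graph `G_W`, burning one
vertex at a time, can reach a stage at which `U` is the set of unburnt vertices. -/
inductive BurnsTo (G : Graph α) (η : α → ℕ) (W : Finset α) : Finset α → Prop
  | refl : BurnsTo G η W W
  | burn {U : Finset α} {x : α} (hU : BurnsTo G η W U) (hx : x ∈ U) (hle : G.degIn U x ≤ η x) :
      BurnsTo G η W (U.erase x)

namespace BurnsTo

lemma subset (h : G.BurnsTo η W U) : U ⊆ W := by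
  induction h with
  | refl => exact subset_rfl
  | burn _ _ _ ih => exact (Finset.erase_subset _ _).trans ih

lemma mono (h : G.BurnsTo η W U) (hle : η ≤ ζ) : G.BurnsTo ζ W U := by
  induction h with
  | refl => exact refl
  | burn _ hx hxle ih => exact ih.burn hx (hxle.trans (hle _))

lemma inter (h : G.BurnsTo η W U) (hAW : A ⊆ W) : G.BurnsTo η A (U ∩ A) := by
  induction h with
  | refl => rw [Finset.inter_eq_right.2 hAW]; exact refl
  | @burn U x _ hx hle ih =>
    rw [Finset.erase_inter]
    by_cases hxA : x ∈ A
    · exact ih.burn (Finset.mem_inter.2 ⟨hx, hxA⟩)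
        ((degIn_mono Finset.inter_subset_left x).trans hle)
    · rwa [Finset.erase_eq_of_notMem fun hmem => hxA (Finset.mem_inter.1 hmem).2]

/-- The witness is the first vertex of `F` to burn. -/
lemma exists_degIn_le (h : G.BurnsTo η W U) (hFW : F ⊆ W) (hFU : ¬F ⊆ U) :
    ∃ x ∈ F, x ∉ U ∧ G.degIn F x ≤ η x := by
  induction h with
  | refl => exact absurd hFW hFU
  | @burn U x _ _ hle ih =>
    by_cases hsub : F ⊆ U
    · have hxF : x ∈ F := by
        by_contra hxF
        exact hFU (Finset.subset_erase.2 ⟨hsub, hxF⟩)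
      exact ⟨x, hxF, Finset.notMem_erase x U, (degIn_mono hsub x).trans hle⟩
    · obtain ⟨y, hyF, hyU, hyle⟩ := ih hsub
      exact ⟨y, hyF, fun hy => hyU (Finset.mem_of_mem_erase hy), hyle⟩

end BurnsTo

variable [Fintype α]

lemma WiredRecurrent.exists_burnsTo (h : G.WiredRecurrent W η) (hw : w ∈ W) :
    ∃ U, G.BurnsTo η W U ∧ w ∈ U ∧ G.degIn U w ≤ η w := by
  obtain ⟨U, ⟨hU, hwU⟩, hmin⟩ :=
    exists_minimal_of_wellFoundedLT (fun U => G.BurnsTo η W U ∧ w ∈ U) ⟨W, .refl, hw⟩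
  obtain ⟨x, hxU, hxle⟩ := h.2 U hU.subset ⟨w, hwU⟩
  obtain rfl | hne := eq_or_ne w x
  · exact ⟨U, hU, hwU, hxle⟩
  · have hsub : U ⊆ U.erase x :=
      hmin ⟨hU.burn hxU hxle, Finset.mem_erase.2 ⟨hne, hwU⟩⟩ (Finset.erase_subset x U)
    exact absurd (hsub hxU) (Finset.notMem_erase x U)

lemma WiredMinimal.degIn_eq_of_burnsTo (h : G.WiredMinimal W ξ) (hU : G.BurnsTo ξ W U)
    (hx : x ∈ U) (hle : G.degIn U x ≤ ξ x) : G.degIn U x = ξ x := by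
  by_contra hne
  have hlt : G.degIn U x < ξ x := lt_of_le_of_ne hle hne
  refine h.2 x (hU.subset hx) ⟨by omega, fun y hy => (subOne_le ξ x y).trans_lt (h.1.1 y hy), ?_⟩
  intro F hFW hF
  by_cases hFU : F ⊆ U
  · by_cases hxF : x ∈ F
    · refine ⟨x, hxF, (degIn_mono hFU x).trans ?_⟩
      rw [subOne_self]
      omega
    · obtain ⟨y, hyF, hyle⟩ := h.1.2 F hFW hF
      exact ⟨y, hyF, by rwa [subOne_of_ne ξ (ne_of_mem_of_not_mem hyF hxF)]⟩
  · obtain ⟨y, hyF, hyU, hyle⟩ := hU.exists_degIn_le hFW hFU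
    exact ⟨y, hyF, by rwa [subOne_of_ne ξ (ne_of_mem_of_not_mem hx hyU).symm]⟩

lemma WiredMinimal.b_eq_zero_of_burnsTo (h : G.WiredMinimal (W \ A) ξ)
    (hA : (A : Set α).Pairwise fun x y => G.b x y = 0) (hw : w ∈ A) (hU : G.BurnsTo ξ W U)
    (hwU : w ∈ U) : ∀ x ∈ W, x ∉ U → G.b x w = 0 := by
  induction hU with
  | refl => exact fun x hxW hxn => absurd hxW hxn
  | @burn U x hU hxU hxle ih =>
    obtain ⟨hwx, hwU⟩ := Finset.mem_erase.1 hwU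
    have hx : G.b x w = 0 := by
      by_cases hxA : x ∈ A
      · exact hA hxA hw hwx.symm
      have hxmem : x ∈ U ∩ (W \ A) :=
        Finset.mem_inter.2 ⟨hxU, Finset.mem_sdiff.2 ⟨hU.subset hxU, hxA⟩⟩
      have hsub : U ∩ (W \ A) ⊆ U := Finset.inter_subset_left
      have hexact : G.degIn (U ∩ (W \ A)) x = ξ x :=
        h.degIn_eq_of_burnsTo (hU.inter Finset.sdiff_subset) hxmem
          ((degIn_mono hsub x).trans hxle)
      have hdeg : G.degIn (U ∩ (W \ A)) x = G.degIn U x :=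
        (degIn_mono hsub x).antisymm (hxle.trans hexact.ge)
      exact (degIn_eq_degIn_iff hsub).1 hdeg w hwU (by simp [hw])
    intro y hyW hyn
    obtain rfl | hyx := eq_or_ne y x
    · exact hx
    · exact ih hwU y hyW fun hyU => hyn (Finset.mem_erase.2 ⟨hyx, hyU⟩)

end Sandpile.Graph

theorem statement_9_general {α : Type*} [Fintype α] [DecidableEq α] (G : Sandpile.Graph α)
    (hsymm : ∀ x y, G.b x y = G.b y x) (W A : Finset α) (ξ : α → ℕ)
    (hrec : G.WiredRecurrent W ξ) (hA : (A : Set α).Pairwise fun x y => G.b x y = 0)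
    (hdeg : ∀ w ∈ A, ξ w ≤ G.degIn W w) (hmin : G.WiredMinimal (W \ A) ξ) :
    G.WiredMinimal W ξ := by
  refine ⟨hrec, fun w hw ⟨hpos, hrec'⟩ => ?_⟩
  by_cases hwA : w ∈ A
  · obtain ⟨U, hU, hwU, hle⟩ := hrec'.exists_burnsTo hw
    have hburnt : ∀ x ∈ W, x ∉ U → G.b w x = 0 := fun x hxW hxU =>
      (hsymm w x).trans <|
        hmin.b_eq_zero_of_burnsTo hA hwA (hU.mono (Graph.subOne_le ξ w)) hwU x hxW hxU
    have hself : ξ w ≤ ξ w - 1 := calc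
      ξ w ≤ G.degIn W w := hdeg w hwA
      _ = G.degIn U w := ((Graph.degIn_eq_degIn_iff hU.subset).2 hburnt).symm
      _ ≤ Graph.SubOne ξ w w := hle
      _ = ξ w - 1 := Graph.subOne_self ξ w
    omega
  · exact hmin.2 w (Finset.mem_sdiff.2 ⟨hw, hwA⟩) ⟨hpos, hrec'.mono Finset.sdiff_subset⟩

/-- Lemma 2, converse. If `ξ ∈ R_{G_W}` has pairwise non-adjacent
entry points, `ξ(w) = deg_W(w)` at every entry point, and the restriction to
`W' = W \ E(ξ,W)` is minimal in `G_{W'}`, then `ξ` is minimal in `G_W`. -/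
theorem statement_9 {α : Type*} [Fintype α] [DecidableEq α] (G : Sandpile.Graph α)
    (hG : G.IsSandpileGraph) (W : Finset α) (hWs : G.sink ∉ W)
    (hconn : G.ConnectedOn {x : α | x ∉ W}) (ξ : α → ℕ)
    (hrec : G.WiredRecurrent W ξ)
    (h1 : ∀ w₁ ∈ G.entryPoints W ξ, ∀ w₂ ∈ G.entryPoints W ξ, w₁ ≠ w₂ → G.b w₁ w₂ = 0)
    (h2 : ∀ w ∈ G.entryPoints W ξ, ξ w = G.degIn W w)
    (h3 : G.WiredMinimal (W \ G.entryPoints W ξ) ξ) :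
    G.WiredMinimal W ξ :=
  statement_9_general G hG.1 W (G.entryPoints W ξ) ξ hrec h1 (fun w hw => (h2 w hw).le) h3
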